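/- For every m ≥ 2, the supremum of the mutual information over quantizers with m thresholds is at least the supremum over quantizers with m−1 thresholds: sup{ I_m(h) : h ∈ ℝ^m, h1 < … < hm } ≥ sup{ I_{m−1}(z) : z ∈ ℝ^{m−1}, z1 < … < z_{m−1} }. In particular, if h* attains the maximum of I_m over strictly ordered m-vectors and z* attains the maximum of I_{m−1} over strictly ordered (m−1)-vectors, then I_m(h*) ≥ I_{m−1}(z*). -/

import Mathlib

/-!
Append to a strictly ordered vector `z` one further threshold `T` above all the others. The two
quantizers differ only on `[T, ∞)`, over which the integral of an integrable function vanishes as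
`T → ∞`. Hence the pair `(A11, A22)` of the longer vector tends to that of `z`, and any upper bound
for a continuous function of this pair over the longer vectors also bounds its value at `z`. As the
pairs stay in a compact set, the function is bounded above, so its supremum is such an upper bound.
-/

open MeasureTheory Real Set Filter

/-- Binary entropy function. -/
noncomputable def Hb (w : ℝ) : ℝ := -(w * Real.log w) - (1 - w) * Real.log (1 - w)

/-- The union of the odd-indexed pieces of the partition of ℝ induced by the
thresholds `h 0 < h 1 < ⋯ < h (n-1)`, i.e. `(-∞, h 0) ∪ [h 1, h 2) ∪ ⋯`:
a point `y` belongs to it iff the number of thresholds `≤ y` is even. -/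
def oddUnion {n : ℕ} (h : Fin n → ℝ) : Set ℝ :=
  {y | Even (Finset.univ.filter (fun i => h i ≤ y)).card}

noncomputable def A11 (φ0 : ℝ → ℝ) {n : ℕ} (h : Fin n → ℝ) : ℝ := ∫ y in oddUnion h, φ0 y

noncomputable def A22 (φ1 : ℝ → ℝ) {n : ℕ} (h : Fin n → ℝ) : ℝ := ∫ y in (oddUnion h)ᶜ, φ1 y

noncomputable def q0 (p0 p1 : ℝ) (φ0 φ1 : ℝ → ℝ) {n : ℕ} (h : Fin n → ℝ) : ℝ :=
  p0 * A11 φ0 h + p1 * (1 - A22 φ1 h)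

/-- Mutual information of the quantizer with thresholding vector `h`. -/
noncomputable def MI (p0 p1 : ℝ) (φ0 φ1 : ℝ → ℝ) {n : ℕ} (h : Fin n → ℝ) : ℝ :=
  Hb (q0 p0 p1 φ0 φ1 h) - p0 * Hb (A11 φ0 h) - p1 * Hb (A22 φ1 h)

section SetIntegral

variable {α E : Type*} [MeasurableSpace α] {μ : Measure α} [NormedAddCommGroup E] [NormedSpace ℝ E]
  {f : α → E}

lemma tendsto_setIntegral_of_eventually_mem_iff {ι : Type*} {l : Filter ι}
    [l.IsCountablyGenerated] {s : ι → Set α} {t : Set α} (hf : Integrable f μ)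
    (hs : ∀ i, MeasurableSet (s i)) (ht : MeasurableSet t)
    (hst : ∀ᵐ x ∂μ, ∀ᶠ i in l, x ∈ s i ↔ x ∈ t) :
    Tendsto (fun i => ∫ x in s i, f x ∂μ) l (nhds (∫ x in t, f x ∂μ)) := by
  simp only [← integral_indicator (hs _), ← integral_indicator ht]
  refine tendsto_integral_filter_of_dominated_convergence (fun x => ‖f x‖)
    (.of_forall fun i => (hf.indicator (hs i)).aestronglyMeasurable)
    (.of_forall fun i => .of_forall fun x => norm_indicator_le_norm_self f x) hf.norm ?_
  filter_upwards [hst] with x hx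
  exact tendsto_const_nhds.congr' (hx.mono fun i hi => indicator_eq_indicator hi.symm rfl)

lemma norm_setIntegral_le_integral_norm (hf : Integrable f μ) (s : Set α) :
    ‖∫ x in s, f x ∂μ‖ ≤ ∫ x, ‖f x‖ ∂μ :=
  (norm_integral_le_integral_norm f).trans
    (setIntegral_le_integral hf.norm (.of_forall fun x => norm_nonneg (f x)))

end SetIntegral

lemma strictMono_snoc_iff {α : Type*} [Preorder α] {n : ℕ} {z : Fin n → α} {a : α} :
    StrictMono (Fin.snoc (α := fun _ => α) z a) ↔ StrictMono z ∧ ∀ i, z i < a := by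
  simp [← Fin.insertNth_last', Fin.strictMono_insertNth_iff, Fin.castSucc_lt_last]

lemma continuous_Hb : Continuous Hb := by
  have hHb : Hb = binEntropy := by
    funext w
    rw [Hb, binEntropy_eq_negMulLog_add_negMulLog_one_sub, negMulLog, negMulLog]
    ring
  exact hHb ▸ binEntropy_continuous

lemma measurableSet_oddUnion {n : ℕ} (h : Fin n → ℝ) : MeasurableSet (oddUnion h) := by
  have hmono : Monotone fun y => (Finset.univ.filter fun i => h i ≤ y).card :=
    fun _ _ hxy => Finset.card_le_card
      (Finset.monotone_filter_right _ fun _ _ hi => le_trans hi hxy)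
  exact hmono.measurable (MeasurableSet.of_discrete (s := {k | Even k}))

lemma mem_oddUnion_snoc_iff_of_lt {n : ℕ} (z : Fin n → ℝ) {T y : ℝ} (hy : y < T) :
    y ∈ oddUnion (Fin.snoc (α := fun _ => ℝ) z T) ↔ y ∈ oddUnion z := by
  simp only [oddUnion, Set.mem_ofPred_eq, Finset.card_filter, Fin.sum_univ_castSucc,
    Fin.snoc_castSucc, Fin.snoc_last, not_le.mpr hy, if_false, add_zero]

/-- The operating point of the quantizer with thresholding vector `h`: its pair of probabilities
`(A11, A22)` of a correct decision, through which alone the mutual information depends on `h`. -/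
noncomputable def operatingPoint (φ0 φ1 : ℝ → ℝ) {n : ℕ} (h : Fin n → ℝ) : ℝ × ℝ :=
  (A11 φ0 h, A22 φ1 h)

section OperatingPoint

variable {φ0 φ1 : ℝ → ℝ} {F : ℝ × ℝ → ℝ} {n : ℕ}

lemma tendsto_operatingPoint_snoc (hi0 : Integrable φ0) (hi1 : Integrable φ1) (z : Fin n → ℝ) :
    Tendsto (fun T => operatingPoint φ0 φ1 (Fin.snoc (α := fun _ => ℝ) z T)) atTop
      (nhds (operatingPoint φ0 φ1 z)) := by
  have hmem (y : ℝ) : ∀ᶠ T in atTop,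
      y ∈ oddUnion (Fin.snoc (α := fun _ => ℝ) z T) ↔ y ∈ oddUnion z :=
    (eventually_gt_atTop y).mono fun _ hT => mem_oddUnion_snoc_iff_of_lt z hT
  refine Tendsto.prodMk_nhds
    (tendsto_setIntegral_of_eventually_mem_iff hi0 (fun _ => measurableSet_oddUnion _)
      (measurableSet_oddUnion z) (.of_forall hmem))
    (tendsto_setIntegral_of_eventually_mem_iff hi1 (fun _ => (measurableSet_oddUnion _).compl)
      (measurableSet_oddUnion z).compl (.of_forall fun y => ?_))
  exact (hmem y).mono fun _ hT => not_congr hT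

lemma operatingPoint_mem_closedBall (hi0 : Integrable φ0) (hi1 : Integrable φ1)
    (h : Fin n → ℝ) :
    operatingPoint φ0 φ1 h ∈ Metric.closedBall 0 (max (∫ y, ‖φ0 y‖) (∫ y, ‖φ1 y‖)) :=
  mem_closedBall_zero_iff.mpr <| max_le_max (norm_setIntegral_le_integral_norm hi0 _)
    (norm_setIntegral_le_integral_norm hi1 _)

lemma bddAbove_range_comp_operatingPoint (hF : Continuous F) (hi0 : Integrable φ0)
    (hi1 : Integrable φ1) :
    BddAbove (range fun h : Fin n → ℝ => F (operatingPoint φ0 φ1 h)) :=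
  ((isCompact_closedBall _ _).bddAbove_image hF.continuousOn).mono <|
    range_subset_iff.mpr fun h => mem_image_of_mem F (operatingPoint_mem_closedBall hi0 hi1 h)

lemma comp_operatingPoint_le_of_forall_succ_le (hF : Continuous F) (hi0 : Integrable φ0)
    (hi1 : Integrable φ1) {z : Fin n → ℝ} (hz : StrictMono z) {B : ℝ}
    (hB : ∀ h : Fin (n + 1) → ℝ, StrictMono h → F (operatingPoint φ0 φ1 h) ≤ B) :
    F (operatingPoint φ0 φ1 z) ≤ B := by
  have hlim := (hF.tendsto _).comp (tendsto_operatingPoint_snoc hi0 hi1 z)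
  have hlarge : ∀ᶠ T in atTop, ∀ i, z i < T := eventually_all.mpr fun i => eventually_gt_atTop (z i)
  exact le_of_tendsto hlim <| hlarge.mono fun _ hT => hB _ (strictMono_snoc_iff.mpr ⟨hz, hT⟩)

theorem stmt_3_general (hF : Continuous F) (hi0 : Integrable φ0) (hi1 : Integrable φ1) (n : ℕ) :
    sSup {x : ℝ | ∃ z : Fin n → ℝ, StrictMono z ∧ F (operatingPoint φ0 φ1 z) = x} ≤
      sSup {x : ℝ | ∃ h : Fin (n + 1) → ℝ, StrictMono h ∧ F (operatingPoint φ0 φ1 h) = x} ∧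
    ∀ (hstar : Fin (n + 1) → ℝ) (z : Fin n → ℝ), StrictMono z →
      IsMaxOn (fun h => F (operatingPoint φ0 φ1 h)) {h | StrictMono h} hstar →
      F (operatingPoint φ0 φ1 z) ≤ F (operatingPoint φ0 φ1 hstar) := by
  have hbdd : BddAbove {x | ∃ h : Fin (n + 1) → ℝ, StrictMono h ∧
      F (operatingPoint φ0 φ1 h) = x} :=
    (bddAbove_range_comp_operatingPoint hF hi0 hi1).mono <| by
      rintro _ ⟨h, -, rfl⟩
      exact mem_range_self h
  refine ⟨csSup_le ?nonempty ?upperBound, fun hstar z hz hmax => ?maximizer⟩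
  case nonempty => exact ⟨_, fun i => (i : ℝ), fun _ _ hij => Nat.cast_lt.mpr hij, rfl⟩
  case upperBound =>
    rintro _ ⟨z, hz, rfl⟩
    exact comp_operatingPoint_le_of_forall_succ_le hF hi0 hi1 hz
      fun h hh => le_csSup hbdd ⟨h, hh, rfl⟩
  case maximizer =>
    exact comp_operatingPoint_le_of_forall_succ_le hF hi0 hi1 hz fun h hh => hmax hh

end OperatingPoint

/-- Mutual information as a function of the operating point `a = (A11, A22)`. -/
noncomputable def operatingPointMI (p0 p1 : ℝ) (a : ℝ × ℝ) : ℝ :=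
  Hb (p0 * a.1 + p1 * (1 - a.2)) - p0 * Hb a.1 - p1 * Hb a.2

lemma continuous_operatingPointMI (p0 p1 : ℝ) : Continuous (operatingPointMI p0 p1) := by
  have hHb := continuous_Hb
  unfold operatingPointMI
  fun_prop

/-- with `m = n + 2 ≥ 2`, the supremum of the mutual information over
strictly ordered `m`-vectors is at least the supremum over strictly ordered
`(m-1)`-vectors; in particular a maximizer with `m` thresholds is at least as
good as a maximizer with `m - 1` thresholds. -/
theorem stmt_3
    (p0 p1 : ℝ) (hp0 : p0 ∈ Set.Ioo (0:ℝ) 1) (hp1 : p1 ∈ Set.Ioo (0:ℝ) 1)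
    (hp : p0 + p1 = 1)
    (φ0 φ1 : ℝ → ℝ) (hφ0 : ∀ y, 0 ≤ φ0 y) (hφ1 : ∀ y, 0 ≤ φ1 y)
    (hi0 : Integrable φ0) (hi1 : Integrable φ1)
    (hI0 : ∫ y, φ0 y = 1) (hI1 : ∫ y, φ1 y = 1)
    (n : ℕ) :
    sSup {x : ℝ | ∃ z : Fin (n + 1) → ℝ, StrictMono z ∧ MI p0 p1 φ0 φ1 z = x} ≤
      sSup {x : ℝ | ∃ h : Fin (n + 2) → ℝ, StrictMono h ∧ MI p0 p1 φ0 φ1 h = x} ∧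
    ∀ (hstar : Fin (n + 2) → ℝ) (zstar : Fin (n + 1) → ℝ),
      StrictMono hstar → StrictMono zstar →
      IsMaxOn (fun h : Fin (n + 2) → ℝ => MI p0 p1 φ0 φ1 h)
        {h : Fin (n + 2) → ℝ | StrictMono h} hstar →
      IsMaxOn (fun z : Fin (n + 1) → ℝ => MI p0 p1 φ0 φ1 z)
        {z : Fin (n + 1) → ℝ | StrictMono z} zstar →
      MI p0 p1 φ0 φ1 zstar ≤ MI p0 p1 φ0 φ1 hstar := by
  have hgen := stmt_3_general (continuous_operatingPointMI p0 p1) hi0 hi1 (n + 1)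
  exact ⟨hgen.1, fun hstar zstar _ hz hmax _ => hgen.2 hstar zstar hz hmax⟩
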